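/- Let K be a kernel of hyperbolic type on a set X. Then the following are equivalent: (i) for every real t > 0, the pointwise power K^t is a kernel of hyperbolic type; (ii) K is arboreal, i.e., there exist a real tree (T,d) and a map f : X → T such that K(x,y) = exp(d(f(x),f(y))) for all x,y ∈ X. Here a real tree is a metric space (T,d) that is geodesic (for all x,y ∈ T there is a map γ : [0,d(x,y)] → T with γ(0)=x, γ(d(x,y))=y and d(γ(s),γ(t)) = |s−t| for all s,t) and 0-hyperbolic (for all o,x,y,z ∈ T one has (x|z)_o ≥ min((x|y)_o,(y|z)_o), where (x|y)_o = ½(d(o,x)+d(o,y)−d(x,y))). -/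

import Mathlib

universe u

/-- A kernel of hyperbolic type on a set `X`: symmetric, nonnegative, with diagonal `1`,
satisfying the hyperbolic Cauchy–Schwarz inequalities. -/
def IsHypKernel {X : Type*} (K : X → X → ℝ) : Prop :=
  (∀ x y, K x y = K y x) ∧ (∀ x y, 0 ≤ K x y) ∧ (∀ x, K x x = 1) ∧
  ∀ (n : ℕ) (x₀ : X) (x : Fin n → X) (lam : Fin n → ℝ),
    (∑ i, ∑ j, lam i * lam j * K (x i) (x j)) ≤ (∑ k, lam k * K x₀ (x k)) ^ 2

/-- The Gromov product `(x|y)_o` in a metric space. -/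
noncomputable def gromovProd {T : Type*} [MetricSpace T] (o x y : T) : ℝ :=
  (dist o x + dist o y - dist x y) / 2

/-- A real tree: a geodesic metric space that is `0`-hyperbolic. -/
def IsRealTree (T : Type*) [MetricSpace T] : Prop :=
  (∀ x y : T, ∃ γ : ℝ → T, γ 0 = x ∧ γ (dist x y) = y ∧
      ∀ s ∈ Set.Icc (0 : ℝ) (dist x y), ∀ t ∈ Set.Icc (0 : ℝ) (dist x y),
        dist (γ s) (γ t) = |s - t|) ∧
  (∀ o x y z : T, min (gromovProd o x y) (gromovProd o y z) ≤ gromovProd o x z)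

/-!
Write `d = log K`. If `F` is of hyperbolic type, the hyperbolic Cauchy–Schwarz inequality with the
weights `1 / F o x`, `-2 / F o y`, `1 / F o z`, which annihilate its right-hand side, yields
Ptolemy's inequality for `F` up to a factor `2`. For `F = K ^ t` with `t → ∞` the factor disappears
and the four-point condition for `d` remains. Hence the Gromov product of `d` at a root `o` is
ultrametric, and the segments `[0, d o x]`, glued along their initial parts of length given by the
Gromov products, form a real tree.

Conversely, on a real tree `K x y ^ t = b x * b y * (1 - g x y)` with `b = K o · ^ t` and
`g = 1 - exp (-2 t (·|·)_o)`, so hyperbolic type amounts to positive semidefiniteness of the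
nonnegative ultrametric kernel `g`. The superlevel sets of `g` are partial equivalence relations,
whose indicators are positive semidefinite, and `g` is the integral of these indicators over all
levels.
-/

section UltrametricKernel

open MeasureTheory

variable {X Y : Type*} {g : X → X → ℝ}

/-- A symmetric kernel satisfying the ultrametric inequality, with the order reversed as for a
Gromov product: large values mean proximity. -/
structure IsUltrametricKernel (g : X → X → ℝ) : Prop where
  symm : ∀ x y, g x y = g y x
  min_le : ∀ x y z, min (g x y) (g y z) ≤ g x z

/-- The pseudometric recovered from a kernel `g` that plays the role of its Gromov product at a
root, so that `g x x` is the distance of `x` from the root. -/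
def kernelDist (g : X → X → ℝ) (x y : X) : ℝ :=
  g x x + g y y - 2 * g x y

lemma posSemidef_of_symm_of_trans {r : X → X → Prop} [DecidableRel r]
    (symm : ∀ {x y}, r x y → r y x) (trans : ∀ {x y z}, r x y → r y z → r x z) :
    (Matrix.of fun x y => if r x y then (1 : ℝ) else 0).PosSemidef := by
  classical
  let block (x : X) : Set X := {z | r x z}
  have hblock (x y : X) : r x y ↔ block x = block y ∧ (block x).Nonempty := by
    refine ⟨fun hxy => ⟨?_, y, hxy⟩, ?_⟩
    · exact Set.ext fun z => ⟨trans (symm hxy), trans hxy⟩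
    · rintro ⟨heq, z, hxz⟩
      have hyz : z ∈ block y := heq ▸ hxz
      exact trans hxz (symm hyz)
  have hdiag : 0 ≤ fun c : Set X => if c.Nonempty then (1 : ℝ) else 0 := fun c => by
    dsimp only [Pi.zero_apply]
    split_ifs <;> norm_num
  convert (Matrix.PosSemidef.diagonal hdiag).submatrix block using 1
  ext x y
  rw [Matrix.of_apply, Matrix.submatrix_apply, Matrix.diagonal_apply, ← ite_and,
    if_congr (hblock x y) rfl rfl]

lemma posSemidef_integral {Ω : Type*} [MeasurableSpace Ω] {μ : Measure Ω} {M : Ω → Matrix X X ℝ}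
    (hM : ∀ ω, (M ω).PosSemidef) (hint : ∀ x y, Integrable (fun ω => M ω x y) μ) :
    (Matrix.of fun x y => ∫ ω, M ω x y ∂μ).PosSemidef := by
  refine ⟨Matrix.IsHermitian.ext fun x y => ?_, fun v => ?_⟩
  · exact integral_congr_ae (.of_forall fun ω => (hM ω).1.apply x y)
  have hterm (x y : X) : Integrable (fun ω => star (v x) * M ω x y * v y) μ :=
    ((hint x y).const_mul _).mul_const _
  have hform : ∫ ω, (v.sum fun x vx => v.sum fun y vy => star vx * M ω x y * vy) ∂μ =
      v.sum fun x vx => v.sum fun y vy => star vx * (∫ ω, M ω x y ∂μ) * vy := by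
    simp only [Finsupp.sum]
    rw [integral_finsetSum _ fun x _ => integrable_finsetSum _ fun y _ => hterm x y]
    refine Finset.sum_congr rfl fun x _ => ?_
    rw [integral_finsetSum _ fun y _ => hterm x y]
    simp only [integral_mul_const, integral_const_mul]
  exact (integral_nonneg fun ω => (hM ω).2 v).trans_eq hform

namespace IsUltrametricKernel

lemma le_self_left (hg : IsUltrametricKernel g) (x y : X) : g x y ≤ g x x := by
  simpa only [hg.symm y x, min_self] using hg.min_le x y x

lemma le_self_right (hg : IsUltrametricKernel g) (x y : X) : g x y ≤ g y y :=
  hg.symm x y ▸ hg.le_self_left y x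

lemma comp (hg : IsUltrametricKernel g) (f : Y → X) :
    IsUltrametricKernel fun x y => g (f x) (f y) :=
  ⟨fun _ _ => hg.symm _ _, fun _ _ _ => hg.min_le _ _ _⟩

lemma comp_monotone (hg : IsUltrametricKernel g) {φ : ℝ → ℝ} (hφ : Monotone φ) :
    IsUltrametricKernel fun x y => φ (g x y) where
  symm x y := congrArg φ (hg.symm x y)
  min_le x y z := hφ.map_min.symm.trans_le (hφ (hg.min_le x y z))

theorem posSemidef (hg : IsUltrametricKernel g) (hnonneg : ∀ x y, 0 ≤ g x y) :
    (Matrix.of g).PosSemidef := by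
  classical
  let level (s : ℝ) : Matrix X X ℝ :=
    Matrix.of fun x y => (Set.Ioo 0 (g x y)).indicator 1 s
  have hlevel (s : ℝ) : (level s).PosSemidef := by
    have h := posSemidef_of_symm_of_trans (r := fun x y => s ∈ Set.Ioo 0 (g x y))
      (fun {x y} hxy => hg.symm x y ▸ hxy)
      (fun {x y z} hxy hyz => ⟨hxy.1, (lt_min hxy.2 hyz.2).trans_le (hg.min_le x y z)⟩)
    simpa only [level, Set.indicator_apply, Pi.one_apply] using h
  have hintegrable (x y : X) : Integrable fun s => level s x y :=
    (integrable_indicator_iff measurableSet_Ioo).2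
      (integrableOn_const measure_Ioo_lt_top.ne)
  have hintegral (x y : X) : ∫ s, level s x y = g x y := by
    rw [← sub_zero (g x y), ← Real.volume_real_Ioo_of_le (hnonneg x y),
      ← integral_indicator_one measurableSet_Ioo]
    rfl
  simpa only [hintegral] using posSemidef_integral hlevel hintegrable

theorem sum_sum_mul_nonneg [Fintype X] (hg : IsUltrametricKernel g) (hnonneg : ∀ x y, 0 ≤ g x y)
    (c : X → ℝ) : 0 ≤ ∑ x, ∑ y, c x * c y * g x y := by
  have h := (hg.posSemidef hnonneg).dotProduct_mulVec_nonneg c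
  simpa only [dotProduct, Matrix.mulVec, Matrix.of_apply, star_trivial, Finset.mul_sum,
    mul_comm (g _ _), mul_assoc] using h

end IsUltrametricKernel

end UltrametricKernel

section ZeroHyperbolic

variable {X Y : Type*} {d : X → X → ℝ}

/-- A `0`-hyperbolic pseudometric: the four-point condition contains the triangle inequality and
nonnegativity. -/
structure IsZeroHyperbolic (d : X → X → ℝ) : Prop where
  self : ∀ x, d x x = 0
  symm : ∀ x y, d x y = d y x
  four_point : ∀ o x y z, d x z + d o y ≤ max (d x y + d o z) (d y z + d o x)

/-- The Gromov product of an arbitrary kernel; `gromovProd` is the case of the distance of a metric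
space. -/
noncomputable def kernelGromovProd (d : X → X → ℝ) (o x y : X) : ℝ :=
  (d o x + d o y - d x y) / 2

namespace IsZeroHyperbolic

lemma triangle (hd : IsZeroHyperbolic d) (x y z : X) : d x z ≤ d x y + d y z := by
  have h := hd.four_point y x y z
  rw [hd.self, hd.symm y x, add_zero, add_comm (d y z), max_self] at h
  exact h

lemma nonneg (hd : IsZeroHyperbolic d) (x y : X) : 0 ≤ d x y := by
  have h := hd.triangle x y x
  rw [hd.self, hd.symm y x] at h
  linarith

lemma comp (hd : IsZeroHyperbolic d) (f : Y → X) : IsZeroHyperbolic fun x y => d (f x) (f y) :=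
  ⟨fun _ => hd.self _, fun _ _ => hd.symm _ _, fun _ _ _ _ => hd.four_point _ _ _ _⟩

lemma const_mul (hd : IsZeroHyperbolic d) {t : ℝ} (ht : 0 ≤ t) :
    IsZeroHyperbolic fun x y => t * d x y where
  self x := by rw [hd.self, mul_zero]
  symm x y := by rw [hd.symm]
  four_point o x y z := by
    simp only [← mul_add, ← mul_max_of_nonneg _ _ ht]
    exact mul_le_mul_of_nonneg_left (hd.four_point o x y z) ht

/-- The pseudometric space structure whose distance is a given `0`-hyperbolic pseudometric. -/
abbrev pseudoMetricSpace (hd : IsZeroHyperbolic d) : PseudoMetricSpace X where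
  dist := d
  dist_self := hd.self
  dist_comm := hd.symm
  dist_triangle := hd.triangle

lemma kernelGromovProd_self (hd : IsZeroHyperbolic d) (o x : X) :
    kernelGromovProd d o x x = d o x := by
  rw [kernelGromovProd, hd.self]
  ring

lemma kernelGromovProd_nonneg (hd : IsZeroHyperbolic d) (o x y : X) :
    0 ≤ kernelGromovProd d o x y := by
  have h := hd.triangle x o y
  rw [hd.symm x o] at h
  rw [kernelGromovProd]
  linarith

lemma isUltrametricKernel_kernelGromovProd (hd : IsZeroHyperbolic d) (o : X) :
    IsUltrametricKernel (kernelGromovProd d o) where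
  symm x y := by rw [kernelGromovProd, kernelGromovProd, hd.symm x y, add_comm (d o x)]
  min_le x y z := by
    have h := hd.four_point o x y z
    rw [le_max_iff] at h
    rw [min_le_iff]
    simp only [kernelGromovProd]
    exact h.imp (fun h => by linarith) (fun h => by linarith)

end IsZeroHyperbolic

lemma isZeroHyperbolic_dist_iff {T : Type*} [MetricSpace T] :
    IsZeroHyperbolic (dist : T → T → ℝ) ↔
      ∀ o x y z : T, min (gromovProd o x y) (gromovProd o y z) ≤ gromovProd o x z := by
  refine ⟨fun h o x y z => (h.isUltrametricKernel_kernelGromovProd o).min_le x y z,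
    fun h => ⟨dist_self, dist_comm, fun o x y z => ?_⟩⟩
  have h := h o x y z
  rw [min_le_iff] at h
  simp only [gromovProd] at h
  rw [le_max_iff]
  exact h.imp (fun h => by linarith) (fun h => by linarith)

lemma IsUltrametricKernel.min_add_add_le {g : X → X → ℝ} (hg : IsUltrametricKernel g)
    (o x y z : X) : min (g x y + g o z) (g y z + g o x) ≤ g x z + g o y := by
  have hxyz := hg.min_le x y z
  have hxoz := hg.min_le x o z
  have hoxy := hg.min_le o x y
  have hozy := hg.min_le o z y
  rw [hg.symm x o] at hxoz
  rw [hg.symm z y] at hozy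
  grind

lemma IsUltrametricKernel.isZeroHyperbolic_kernelDist {g : X → X → ℝ}
    (hg : IsUltrametricKernel g) : IsZeroHyperbolic (kernelDist g) where
  self x := by rw [kernelDist]; ring
  symm x y := by rw [kernelDist, kernelDist, hg.symm x y, add_comm (g x x)]
  four_point o x y z := by
    have h := hg.min_add_add_le o x y z
    rw [min_le_iff] at h
    rw [le_max_iff]
    simp only [kernelDist]
    exact h.imp (fun h => by linarith) (fun h => by linarith)

end ZeroHyperbolic

section RealTree

variable {X : Type*} {d : X → X → ℝ}

lemma isRealTree_separationQuotient_of_geodesic {Y : Type*} [PseudoMetricSpace Y]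
    (hzero : IsZeroHyperbolic (dist : Y → Y → ℝ))
    (hgeodesic : ∀ p q : Y, ∃ γ : ℝ → Y, dist (γ 0) p = 0 ∧ dist (γ (dist p q)) q = 0 ∧
      ∀ s ∈ Set.Icc 0 (dist p q), ∀ t ∈ Set.Icc 0 (dist p q), dist (γ s) (γ t) = |s - t|) :
    IsRealTree (SeparationQuotient Y) := by
  have hmk {p q : Y} (hpq : dist p q = 0) : SeparationQuotient.mk p = SeparationQuotient.mk q :=
    SeparationQuotient.mk_eq_mk.2 (Metric.inseparable_iff.2 hpq)
  refine ⟨?_, isZeroHyperbolic_dist_iff.1 ⟨dist_self, dist_comm, ?_⟩⟩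
  · refine SeparationQuotient.surjective_mk.forall₂.2 fun p q => ?_
    obtain ⟨γ, hleft, hright, hdist⟩ := hgeodesic p q
    exact ⟨SeparationQuotient.mk ∘ γ, hmk hleft, hmk hright, hdist⟩
  · refine SeparationQuotient.surjective_mk.forall₂.2 fun o x => ?_
    exact SeparationQuotient.surjective_mk.forall₂.2 fun y z => hzero.four_point o x y z

/-- The disjoint union of the segments `[0, d o x]`, one for each `x : X`, from which the real tree
spanned by a `0`-hyperbolic pseudometric `d` with root `o` is glued. The proof that `d` is
`0`-hyperbolic is a parameter so that the type can carry the resulting pseudometric. -/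
@[ext]
structure SegmentPoint (_hd : IsZeroHyperbolic d) (o : X) where
  leaf : X
  height : ℝ
  height_mem : height ∈ Set.Icc 0 (d o leaf)

namespace SegmentPoint

variable {hd : IsZeroHyperbolic d} {o : X}

/-- The height at which the branches carrying `p` and `q` separate, or the height of the lower
point if that is smaller: the Gromov product of `p` and `q` at the root of the tree. -/
noncomputable def meet (p q : SegmentPoint hd o) : ℝ :=
  min (min p.height q.height) (kernelGromovProd d o p.leaf q.leaf)

lemma meet_self (p : SegmentPoint hd o) : meet p p = p.height := by
  rw [meet, min_self, hd.kernelGromovProd_self, min_eq_left p.height_mem.2]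

lemma meet_nonneg (p q : SegmentPoint hd o) : 0 ≤ meet p q :=
  le_min (le_min p.height_mem.1 q.height_mem.1) (hd.kernelGromovProd_nonneg o p.leaf q.leaf)

lemma meet_le_left (p q : SegmentPoint hd o) : meet p q ≤ p.height :=
  (min_le_left _ _).trans (min_le_left _ _)

lemma meet_le_right (p q : SegmentPoint hd o) : meet p q ≤ q.height :=
  (min_le_left _ _).trans (min_le_right _ _)

lemma isUltrametricKernel_meet : IsUltrametricKernel (meet (hd := hd) (o := o)) where
  symm p q := by
    rw [meet, meet, min_comm p.height,
      (hd.isUltrametricKernel_kernelGromovProd o).symm p.leaf]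
  min_le p q r := le_min
    (le_min ((min_le_left _ _).trans (meet_le_left p q))
      ((min_le_right _ _).trans (meet_le_right q r)))
    ((min_le_min (min_le_right _ _) (min_le_right _ _)).trans
      ((hd.isUltrametricKernel_kernelGromovProd o).min_le p.leaf q.leaf r.leaf))

noncomputable instance : PseudoMetricSpace (SegmentPoint hd o) :=
  isUltrametricKernel_meet.isZeroHyperbolic_kernelDist.pseudoMetricSpace

lemma dist_eq (p q : SegmentPoint hd o) : dist p q = p.height + q.height - 2 * meet p q := by
  change kernelDist meet p q = _
  rw [kernelDist, meet_self, meet_self]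

/-- The point at height `s` of the segment of `x`, with `s` truncated to `[0, d o x]`. -/
noncomputable def ofHeight (hd : IsZeroHyperbolic d) (o x : X) (s : ℝ) : SegmentPoint hd o where
  leaf := x
  height := Set.projIcc 0 (d o x) (hd.nonneg o x) s
  height_mem := Subtype.prop _

lemma height_ofHeight {x : X} {s : ℝ} (hs : s ∈ Set.Icc 0 (d o x)) :
    (ofHeight hd o x s).height = s :=
  congrArg Subtype.val (Set.projIcc_of_mem (hd.nonneg o x) hs)

lemma ofHeight_leaf_height (p : SegmentPoint hd o) : ofHeight hd o p.leaf p.height = p :=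
  SegmentPoint.ext rfl (height_ofHeight p.height_mem)

lemma dist_ofHeight_ofHeight {x y : X} {s t : ℝ} (hs : s ∈ Set.Icc 0 (d o x))
    (ht : t ∈ Set.Icc 0 (d o y)) : dist (ofHeight hd o x s) (ofHeight hd o y t) =
      s + t - 2 * min (min s t) (kernelGromovProd d o x y) := by
  rw [dist_eq, meet, height_ofHeight hs, height_ofHeight ht]
  rfl

lemma dist_ofHeight_same {x : X} {s t : ℝ} (hs : s ∈ Set.Icc 0 (d o x))
    (ht : t ∈ Set.Icc 0 (d o x)) : dist (ofHeight hd o x s) (ofHeight hd o x t) = |s - t| := by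
  rw [dist_ofHeight_ofHeight hs ht, hd.kernelGromovProd_self,
    min_eq_left ((min_le_left s t).trans hs.2), ← max_sub_min_eq_abs', ← max_add_min s t]
  ring

lemma dist_ofHeight_of_meet_le {p q : SegmentPoint hd o} {s t : ℝ}
    (hs : s ∈ Set.Icc (meet p q) p.height) (ht : t ∈ Set.Icc (meet p q) q.height) :
    dist (ofHeight hd o p.leaf s) (ofHeight hd o q.leaf t) = s + t - 2 * meet p q := by
  have hmeet : min (min s t) (kernelGromovProd d o p.leaf q.leaf) = meet p q :=
    le_antisymm (min_le_min_right _ (min_le_min hs.2 ht.2))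
      (le_min (le_min hs.1 ht.1) (min_le_right _ _))
  rw [dist_ofHeight_ofHeight ⟨(meet_nonneg p q).trans hs.1, hs.2.trans p.height_mem.2⟩
    ⟨(meet_nonneg p q).trans ht.1, ht.2.trans q.height_mem.2⟩, hmeet]

/-- The path from `p` to `q` parametrized by arc length: down the segment of `p` to height
`meet p q`, then up the segment of `q`. -/
noncomputable def geodesic (p q : SegmentPoint hd o) (r : ℝ) : SegmentPoint hd o :=
  if r ≤ p.height - meet p q then ofHeight hd o p.leaf (p.height - r)
  else ofHeight hd o q.leaf (r - p.height + 2 * meet p q)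

lemma geodesic_zero (p q : SegmentPoint hd o) : geodesic p q 0 = p := by
  rw [geodesic, if_pos (sub_nonneg.2 (meet_le_left p q)), sub_zero, ofHeight_leaf_height]

lemma dist_geodesic_dist (p q : SegmentPoint hd o) : dist (geodesic p q (dist p q)) q = 0 := by
  have hdist := dist_eq p q
  rw [geodesic]
  split_ifs with hdown
  · have hq : q.height = meet p q := le_antisymm (by linarith) (meet_le_right p q)
    have hp : p.height - dist p q = meet p q := by linarith
    calc dist (ofHeight hd o p.leaf (p.height - dist p q)) q
        = dist (ofHeight hd o p.leaf (meet p q)) (ofHeight hd o q.leaf q.height) := by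
          rw [hp, ofHeight_leaf_height]
      _ = meet p q + q.height - 2 * meet p q :=
          dist_ofHeight_of_meet_le ⟨le_rfl, meet_le_left p q⟩ ⟨meet_le_right p q, le_rfl⟩
      _ = 0 := by rw [hq]; ring
  · have hq : dist p q - p.height + 2 * meet p q = q.height := by linarith
    rw [hq, ofHeight_leaf_height, dist_self]

lemma dist_geodesic_geodesic (p q : SegmentPoint hd o) {s t : ℝ} (hs : s ∈ Set.Icc 0 (dist p q))
    (ht : t ∈ Set.Icc 0 (dist p q)) : dist (geodesic p q s) (geodesic p q t) = |s - t| := by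
  wlog hst : s ≤ t generalizing s t
  · rw [dist_comm, abs_sub_comm, this ht hs (le_of_not_ge hst)]
  obtain ⟨hs₀, hs₁⟩ := hs
  obtain ⟨ht₀, ht₁⟩ := ht
  have hmeet := meet_nonneg p q
  have hp := p.height_mem.2
  have hq := q.height_mem.2
  rw [dist_eq] at hs₁ ht₁
  rw [geodesic, geodesic]
  split_ifs with hs_down ht_down ht_down
  · rw [dist_ofHeight_same ⟨by linarith, by linarith⟩ ⟨by linarith, by linarith⟩,
      sub_sub_sub_cancel_left, abs_sub_comm]
  · rw [dist_ofHeight_of_meet_le ⟨by linarith, by linarith⟩ ⟨by linarith, by linarith⟩,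
      abs_sub_comm, abs_of_nonneg (sub_nonneg.2 hst)]
    ring
  · exact absurd (hst.trans ht_down) hs_down
  · rw [dist_ofHeight_same ⟨by linarith, by linarith⟩ ⟨by linarith, by linarith⟩]
    ring_nf

lemma isRealTree_separationQuotient : IsRealTree (SeparationQuotient (SegmentPoint hd o)) :=
  isRealTree_separationQuotient_of_geodesic isUltrametricKernel_meet.isZeroHyperbolic_kernelDist
    fun p q => ⟨geodesic p q, by rw [geodesic_zero, dist_self], dist_geodesic_dist p q,
      fun _ hs _ ht => dist_geodesic_geodesic p q hs ht⟩

lemma dist_ofHeight_top (x y : X) :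
    dist (ofHeight hd o x (d o x)) (ofHeight hd o y (d o y)) = d x y := by
  have hx := (hd.isUltrametricKernel_kernelGromovProd o).le_self_left x y
  have hy := (hd.isUltrametricKernel_kernelGromovProd o).le_self_right x y
  rw [hd.kernelGromovProd_self] at hx hy
  rw [dist_ofHeight_ofHeight ⟨hd.nonneg o x, le_rfl⟩ ⟨hd.nonneg o y, le_rfl⟩,
    min_eq_right (le_min hx hy), kernelGromovProd]
  ring

end SegmentPoint

theorem IsZeroHyperbolic.exists_isRealTree_dist_eq {X : Type u} {d : X → X → ℝ}
    (hd : IsZeroHyperbolic d) :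
    ∃ (T : Type u) (_ : MetricSpace T) (f : X → T),
      IsRealTree T ∧ ∀ x y, dist (f x) (f y) = d x y := by
  rcases isEmpty_or_nonempty X with hX | ⟨⟨o⟩⟩
  · let := hd.pseudoMetricSpace
    exact ⟨X, .ofT0PseudoMetricSpace X, id, ⟨isEmptyElim, isEmptyElim⟩, isEmptyElim⟩
  · exact ⟨SeparationQuotient (SegmentPoint hd o), inferInstance,
      fun x => SeparationQuotient.mk (SegmentPoint.ofHeight hd o x (d o x)),
      SegmentPoint.isRealTree_separationQuotient, SegmentPoint.dist_ofHeight_top⟩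

end RealTree

section HyperbolicKernel

variable {X : Type*} {F d : X → X → ℝ}

namespace IsHypKernel

lemma one_le (hF : IsHypKernel F) (x y : X) : 1 ≤ F x y := by
  obtain ⟨-, hnonneg, hself, hcs⟩ := hF
  have h := hcs 1 x ![y] ![1]
  simp only [Fin.sum_univ_one, Matrix.cons_val_zero, hself y, one_mul] at h
  exact (one_le_sq_iff₀ (hnonneg x y)).1 h

lemma mul_le_two_mul_add (hF : IsHypKernel F) (o x y z : X) :
    F x z * F o y ≤ 2 * (F x y * F o z + F y z * F o x) := by
  have hpos (w : X) : 0 < F o w := one_pos.trans_le (hF.one_le o w)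
  obtain ⟨hsymm, -, hself, hcs⟩ := hF
  -- The weights `1 / F o x`, `-2 / F o y`, `1 / F o z`, cleared of denominators.
  have h := hcs 3 o ![x, y, z] ![F o y * F o z, -2 * (F o x * F o z), F o x * F o y]
  have hbalanced : F o y * F o z * F o x + -2 * (F o x * F o z) * F o y +
      F o x * F o y * F o z = 0 := by ring
  simp only [Fin.sum_univ_three, Matrix.cons_val, hself, hsymm y x, hsymm z x, hsymm z y,
    hbalanced] at h
  have hscale : 0 < 2 * (F o x * F o y * F o z) :=
    mul_pos two_pos (mul_pos (mul_pos (hpos x) (hpos y)) (hpos z))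
  refine le_of_mul_le_mul_left ?_ hscale
  linarith [sq_nonneg (F o y * F o z), sq_nonneg (F o x * F o z), sq_nonneg (F o x * F o y)]

end IsHypKernel

lemma le_max_of_frequently_exp_le {a b c C : ℝ} (hC : 0 ≤ C)
    (h : ∃ᶠ t in Filter.atTop,
      Real.exp (t * c) ≤ C * (Real.exp (t * a) + Real.exp (t * b))) : c ≤ max a b := by
  by_contra! hlt
  have hgrowth : ∀ᶠ t in Filter.atTop, 2 * C < Real.exp (t * (c - max a b)) :=
    (Real.tendsto_exp_atTop.comp
      (Filter.tendsto_id.atTop_mul_const (sub_pos.2 hlt))).eventually_gt_atTop _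
  obtain ⟨t, hle, hlt, ht⟩ :=
    (h.and_eventually (hgrowth.and (Filter.eventually_ge_atTop 0))).exists
  refine absurd hle (not_le.2 ?_)
  calc C * (Real.exp (t * a) + Real.exp (t * b))
      ≤ C * (Real.exp (t * max a b) + Real.exp (t * max a b)) := by
        gcongr
        exacts [le_max_left a b, le_max_right a b]
    _ = 2 * C * Real.exp (t * max a b) := by ring
    _ < Real.exp (t * (c - max a b)) * Real.exp (t * max a b) := by gcongr
    _ = Real.exp (t * c) := by rw [← Real.exp_add]; ring_nf

theorem isZeroHyperbolic_of_frequently_isHypKernel_exp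
    (h : ∃ᶠ t in Filter.atTop, IsHypKernel fun x y => Real.exp (t * d x y)) :
    IsZeroHyperbolic d := by
  obtain ⟨t, ⟨hsymm, -, hself, -⟩, ht⟩ :=
    (h.and_eventually (Filter.eventually_ne_atTop 0)).exists
  refine ⟨fun x => ?_, fun x y => ?_, fun o x y z => ?_⟩
  · exact (mul_eq_zero.1 (Real.exp_eq_one_iff _ |>.1 (hself x))).resolve_left ht
  · exact mul_left_cancel₀ ht (Real.exp_injective (hsymm x y))
  · refine le_max_of_frequently_exp_le zero_le_two (h.mono fun t hF => ?_)
    simpa only [mul_add, Real.exp_add] using hF.mul_le_two_mul_add o x y z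

theorem IsZeroHyperbolic.isHypKernel_exp (hd : IsZeroHyperbolic d) :
    IsHypKernel fun x y => Real.exp (d x y) := by
  refine ⟨fun x y => congrArg Real.exp (hd.symm x y), fun x y => (Real.exp_pos _).le,
    fun x => Real.exp_eq_one_iff _ |>.2 (hd.self x), fun n o x lam => ?_⟩
  have hmono : Monotone fun r : ℝ => 1 - Real.exp (-(2 * r)) := fun r s hrs => by
    dsimp only
    gcongr
  have hultra := ((hd.isUltrametricKernel_kernelGromovProd o).comp x).comp_monotone hmono
  have hexp (y z : X) : Real.exp (d o y) * Real.exp (d o z) *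
      (1 - Real.exp (-(2 * kernelGromovProd d o y z))) =
        Real.exp (d o y) * Real.exp (d o z) - Real.exp (d y z) := by
    rw [mul_sub, mul_one, ← Real.exp_add, ← Real.exp_add, kernelGromovProd]
    ring_nf
  have hnonneg (i j : Fin n) :
      0 ≤ 1 - Real.exp (-(2 * kernelGromovProd d o (x i) (x j))) := by
    simpa using hmono (hd.kernelGromovProd_nonneg o (x i) (x j))
  rw [← sub_nonneg, sq, Finset.sum_mul_sum]
  simp only [← Finset.sum_sub_distrib]
  convert hultra.sum_sum_mul_nonneg hnonneg fun i => lam i * Real.exp (d o (x i)) using 5 with i _ j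
  linear_combination -lam i * lam j * hexp (x i) (x j)

lemma pos_of_frequently_isHypKernel_rpow (hnonneg : ∀ x y, 0 ≤ F x y)
    (h : ∃ᶠ t : ℝ in Filter.atTop, IsHypKernel fun x y => F x y ^ t) (x y : X) : 0 < F x y := by
  obtain ⟨t, hF, ht⟩ := (h.and_eventually (Filter.eventually_ne_atTop 0)).exists
  refine (hnonneg x y).lt_of_ne' fun hzero => ?_
  have hone := hF.one_le x y
  rw [hzero, Real.zero_rpow ht] at hone
  exact absurd hone (by norm_num)

end HyperbolicKernel

/-- Nonnegativity in the second condition rules out signs that even powers do not see, as in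
`(-2) ^ (2 * n) = 2 ^ (2 * n)`. -/
theorem forall_pow_isHypKernel_iff_arboreal_general {X : Type u} (K : X → X → ℝ) :
    [∀ t : ℝ, 0 < t → IsHypKernel fun x y => K x y ^ t,
      (∀ x y, 0 ≤ K x y) ∧ ∃ᶠ t : ℝ in Filter.atTop, IsHypKernel fun x y => K x y ^ t,
      ∃ (T : Type u) (_ : MetricSpace T) (f : X → T),
        IsRealTree T ∧ ∀ x y : X, K x y = Real.exp (dist (f x) (f y))].TFAE := by
  tfae_have 1 → 2 := fun h => by
    refine ⟨?_, ((Filter.eventually_gt_atTop 0).mono h).frequently⟩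
    simpa only [Real.rpow_one] using (h 1 one_pos).2.1
  tfae_have 2 → 3 := fun ⟨hnonneg, h⟩ => by
    have hpos := pos_of_frequently_isHypKernel_rpow hnonneg h
    have hd : IsZeroHyperbolic fun x y => Real.log (K x y) :=
      isZeroHyperbolic_of_frequently_isHypKernel_exp <| h.mono fun t ht => by
        simpa only [Real.rpow_def_of_pos (hpos _ _), mul_comm] using ht
    obtain ⟨T, _, f, hT, hf⟩ := hd.exists_isRealTree_dist_eq
    exact ⟨T, _, f, hT, fun x y => by rw [hf, Real.exp_log (hpos x y)]⟩
  tfae_have 3 → 1 := fun ⟨T, _, f, hT, hK⟩ t ht => by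
    have hd := ((isZeroHyperbolic_dist_iff.2 hT.2).comp f).const_mul ht.le
    simpa only [hK, ← Real.exp_mul, mul_comm] using hd.isHypKernel_exp
  tfae_finish

/-- A kernel of hyperbolic type `K` satisfies that all positive powers `K^t` are again of
hyperbolic type if and only if `K` is arboreal, i.e. of the form
`K(x,y) = exp d(f(x), f(y))` for a map `f` into a real tree. -/
theorem forall_pow_isHypKernel_iff_arboreal {X : Type u} (K : X → X → ℝ)
    (hK : IsHypKernel K) :
    (∀ t : ℝ, 0 < t → IsHypKernel fun x y => K x y ^ t) ↔
    ∃ (T : Type u) (_ : MetricSpace T) (f : X → T),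
      IsRealTree T ∧ ∀ x y : X, K x y = Real.exp (dist (f x) (f y)) :=
  (forall_pow_isHypKernel_iff_arboreal_general K).out 0 2
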